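/- Let 0 < α < n and let r(·), q(·) ∈ C^log(Q_p^n) with r(·) ∈ P(Q_p^n), r_+ < n/α and 1/q(·) = 1/r(·) − α/n. Then the p-adic fractional maximal operator M_α^p is bounded from L^{r(·)}(Q_p^n) to L^{q(·)}(Q_p^n): there is C > 0 such that ‖M_α^p f‖_{L^{q(·)}} ≤ C ‖f‖_{L^{r(·)}} for all f ∈ L^{r(·)}(Q_p^n). -/

import Mathlib

open MeasureTheory ENNReal

noncomputable section

variable {p : ℕ} [Fact p.Prime] {n : ℕ}

/-- The `p`-adic ball `B_γ(x) = {y : ‖y - x‖ ≤ p^γ}` in `ℚ_p^n`. -/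
def pBall (x : Fin n → ℚ_[p]) (γ : ℤ) : Set (Fin n → ℚ_[p]) :=
  Metric.closedBall x ((p : ℝ) ^ γ)

variable [MeasurableSpace (Fin n → ℚ_[p])]

/-- The `p`-adic fractional maximal function `M_α^p f` (with values in `ℝ≥0∞`). -/
def fracMax (μ : Measure (Fin n → ℚ_[p])) (α : ℝ) (f : (Fin n → ℚ_[p]) → ℝ)
    (x : Fin n → ℚ_[p]) : ℝ≥0∞ :=
  ⨆ γ : ℤ, μ (pBall x γ) ^ (α / (n : ℝ) - 1) * ∫⁻ y in pBall x γ, (‖f y‖₊ : ℝ≥0∞) ∂μ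

/-- The fractional maximal function `M_{α,B*}^p f` restricted to a fixed ball `B*`. -/
def fracMaxOn (μ : Measure (Fin n → ℚ_[p])) (α : ℝ) (B : Set (Fin n → ℚ_[p]))
    (f : (Fin n → ℚ_[p]) → ℝ) (x : Fin n → ℚ_[p]) : ℝ≥0∞ :=
  ⨆ (γ : ℤ), ⨆ (_ : pBall x γ ⊆ B),
    μ (pBall x γ) ^ (α / (n : ℝ) - 1) * ∫⁻ y in pBall x γ, (‖f y‖₊ : ℝ≥0∞) ∂μ

/-- The maximal commutator `M_{α,b}^p f`. -/
def maxComm (μ : Measure (Fin n → ℚ_[p])) (α : ℝ) (b f : (Fin n → ℚ_[p]) → ℝ)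
    (x : Fin n → ℚ_[p]) : ℝ≥0∞ :=
  ⨆ γ : ℤ, μ (pBall x γ) ^ (α / (n : ℝ) - 1) *
    ∫⁻ y in pBall x γ, (‖b x - b y‖₊ : ℝ≥0∞) * (‖f y‖₊ : ℝ≥0∞) ∂μ

/-- The nonlinear commutator `[b, M_α^p] f = b · M_α^p f - M_α^p (b f)`. -/
def nlComm (μ : Measure (Fin n → ℚ_[p])) (α : ℝ) (b f : (Fin n → ℚ_[p]) → ℝ)
    (x : Fin n → ℚ_[p]) : ℝ :=
  b x * (fracMax μ α f x).toReal - (fracMax μ α (fun y => b y * f y) x).toReal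

/-- Membership in the `p`-adic Lipschitz space `Λ_β`. -/
def MemLipschitz (β : ℝ) (f : (Fin n → ℚ_[p]) → ℝ) : Prop :=
  ∃ C : ℝ, 0 ≤ C ∧ ∀ x y, |f x - f y| ≤ C * ‖x - y‖ ^ β

/-- The `p`-adic Lipschitz norm `‖f‖_{Λ_β}`. -/
def lipNorm (β : ℝ) (f : (Fin n → ℚ_[p]) → ℝ) : ℝ :=
  sSup {r : ℝ | ∃ x y : Fin n → ℚ_[p], x ≠ y ∧ r = |f x - f y| / ‖x - y‖ ^ β}

/-- The average `b_B` of `b` over a set `B`. -/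
def avg (μ : Measure (Fin n → ℚ_[p])) (B : Set (Fin n → ℚ_[p]))
    (b : (Fin n → ℚ_[p]) → ℝ) : ℝ :=
  (μ B).toReal⁻¹ * ∫ y in B, b y ∂μ

/-- The Luxemburg norm of an `ℝ≥0∞`-valued function. -/
def luxNormE (μ : Measure (Fin n → ℚ_[p])) (q : (Fin n → ℚ_[p]) → ℝ)
    (g : (Fin n → ℚ_[p]) → ℝ≥0∞) : ℝ≥0∞ :=
  sInf {η : ℝ≥0∞ | 0 < η ∧ η < ⊤ ∧ ∫⁻ x, (g x / η) ^ q x ∂μ ≤ 1}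

/-- The Luxemburg norm `‖f‖_{L^{q(·)}}` of a real-valued function. -/
def luxNorm (μ : Measure (Fin n → ℚ_[p])) (q : (Fin n → ℚ_[p]) → ℝ)
    (f : (Fin n → ℚ_[p]) → ℝ) : ℝ≥0∞ :=
  luxNormE μ q fun x => (‖f x‖₊ : ℝ≥0∞)

/-- The class `P(ℚ_p^n)` of variable exponents: `1 < r₋ ≤ r₊ < ∞`. -/
def IsPExp (μ : Measure (Fin n → ℚ_[p])) (r : (Fin n → ℚ_[p]) → ℝ) : Prop :=
  Measurable r ∧ (∀ x, 1 ≤ r x) ∧ 1 < essInf r μ ∧ ∃ M : ℝ, ∀ᵐ x ∂μ, r x ≤ M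

/-- The class `C^log(ℚ_p^n)` of globally log-Hölder continuous variable exponents. -/
def IsLogHolder (μ : Measure (Fin n → ℚ_[p])) (r : (Fin n → ℚ_[p]) → ℝ) : Prop :=
  Measurable r ∧ (∀ x, 1 ≤ r x) ∧
    ∃ C : ℝ, 0 ≤ C ∧
      (∀ (γ : ℤ) (x : Fin n → ℚ_[p]),
        (γ : ℝ) * (essInf r (μ.restrict (pBall x γ)) - essSup r (μ.restrict (pBall x γ))) ≤ C) ∧
      ∀ x y : Fin n → ℚ_[p], |r x - r y| ≤ C / Real.logb p ((p : ℝ) + min ‖x‖ ‖y‖)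

/-- The set of values whose supremum is the `lip_β^q` norm. -/
def lipqSet (μ : Measure (Fin n → ℚ_[p])) (β q : ℝ) (f : (Fin n → ℚ_[p]) → ℝ) : Set ℝ :=
  {r : ℝ | ∃ (x : Fin n → ℚ_[p]) (γ : ℤ),
    r = (μ (pBall x γ)).toReal ^ (-(β / (n : ℝ))) *
      ((μ (pBall x γ)).toReal⁻¹ * ∫ y in pBall x γ, |f y - avg μ (pBall x γ) f| ^ q ∂μ) ^ (1 / q)}

/-!
By homogeneity of the Luxemburg norm it suffices to bound `∫ (M_α f) ^ q` uniformly over all `f`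
with `∫ |f| ^ r ≤ 1`, and such an `f` is split at height `1`. For the large values, Jensen's
inequality and the local log-Hölder condition bound the averages `(⨍_B |f|) ^ r(x)` by
`(M (|f| ^ (r / s))) ^ s`, where `s = r₋ > 1`; together with `|B| ⨍_B |f| ^ r ≤ 1`, Hedberg's trick
turns this into a pointwise bound of `(M_α f) ^ q` by `(M (|f| ^ (r / s))) ^ s`, and `M` is bounded
on `L^s`. For the small values, where both `f` and `M_α f` are bounded, the decay of `r` towards its
limit `r₀` at infinity makes `∫ |f| ^ r` and `∫ |f| ^ r₀` comparable up to an additive constant, and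
the claim reduces to constant exponents.
-/

section Exponents

variable {a q r R : ℝ}

lemma pos_of_one_div_eq_sub (hr : 0 < r) (har : a * r < 1) (h : 1 / q = 1 / r - a) : 0 < q := by
  have : a < 1 / r := (lt_div_iff₀ hr).2 har
  exact one_div_pos.1 (by linarith)

lemma eq_add_mul_of_one_div_eq_sub (hr : 0 < r) (har : a * r < 1) (h : 1 / q = 1 / r - a) :
    q = r + r * (a * q) := by
  have hq := pos_of_one_div_eq_sub hr har h
  field_simp at h
  linarith

lemma le_of_one_div_eq_sub (ha : 0 ≤ a) (hr : 0 < r) (har : a * r < 1)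
    (h : 1 / q = 1 / r - a) : r ≤ q := by
  have hq := pos_of_one_div_eq_sub hr har h
  have := eq_add_mul_of_one_div_eq_sub hr har h
  have : 0 ≤ r * (a * q) := by positivity
  linarith

lemma le_div_of_one_div_eq_sub (ha : 0 ≤ a) (hr : 0 < r) (hrR : r ≤ R) (haR : a * R < 1)
    (h : 1 / q = 1 / r - a) : q ≤ R / (1 - a * R) := by
  have har : a * r < 1 := (mul_le_mul_of_nonneg_left hrR ha).trans_lt haR
  have hq := pos_of_one_div_eq_sub hr har h
  have hrq := eq_add_mul_of_one_div_eq_sub hr har h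
  have : r * (a * q) ≤ R * (a * q) := mul_le_mul_of_nonneg_right hrR (by positivity)
  rw [le_div_iff₀ (by linarith)]
  linarith

lemma rpow_mul_rpow_eq_rpow_mul (ha : 0 ≤ a) (hq : 0 ≤ q) (hr : 0 ≤ r)
    (h : q = r + r * (a * q)) (m A : ℝ≥0∞) :
    (m ^ a * A) ^ q = A ^ r * (m * A ^ r) ^ (a * q) := by
  have haq : 0 ≤ a * q := mul_nonneg ha hq
  calc (m ^ a * A) ^ q = m ^ (a * q) * A ^ q := by
        rw [mul_rpow_of_nonneg _ _ hq, ← ENNReal.rpow_mul]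
    _ = m ^ (a * q) * A ^ (r + r * (a * q)) := by rw [← h]
    _ = A ^ r * (m * A ^ r) ^ (a * q) := by
        rw [ENNReal.rpow_add_of_nonneg _ _ hr (mul_nonneg hr haq), mul_rpow_of_nonneg _ _ haq,
          ← ENNReal.rpow_mul, mul_left_comm]

end Exponents

lemma rpow_le_rpow_mul_rpow_add_rpow_neg {t w : ℝ≥0∞} {u v D : ℝ} (ht : t ≤ 1) (hw : 1 ≤ w)
    (hu : 0 < u) (hv : 0 < v) (hD : D * |1 / u - 1 / v| ≤ 1) :
    t ^ u ≤ w ^ v * t ^ v + w ^ (-D) := by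
  rcases le_or_gt v u with hvu | huv
  · calc t ^ u ≤ t ^ v := ENNReal.rpow_le_rpow_of_exponent_ge ht hvu
      _ ≤ w ^ v * t ^ v := le_mul_of_one_le_left' (ENNReal.one_le_rpow hw hv)
      _ ≤ _ := le_self_add
  rcases le_or_gt (t ^ u) (w ^ (-D)) with hle | hlt
  · exact hle.trans le_add_self
  have ht0 : t ≠ 0 := by
    rintro rfl
    simp [ENNReal.zero_rpow_of_pos hu] at hlt
  have hexp : D * ((v - u) / u) ≤ v := by
    have habs : |1 / u - 1 / v| = (v - u) / u / v := by
      rw [abs_of_pos (sub_pos.2 (one_div_lt_one_div_of_lt hu huv))]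
      field_simp
    rwa [habs, ← mul_div_assoc, div_le_one hv] at hD
  calc t ^ u = (t ^ u) ^ (-((v - u) / u)) * t ^ v := by
        rw [← ENNReal.rpow_mul, ← ENNReal.rpow_add _ _ ht0 (ht.trans_lt one_lt_top).ne]
        congr 1
        field_simp
        ring
    _ ≤ (w ^ (-D)) ^ (-((v - u) / u)) * t ^ v := by
        have : 0 ≤ (v - u) / u := div_nonneg (sub_nonneg.2 huv.le) hu.le
        rw [ENNReal.rpow_neg (t ^ u), ENNReal.rpow_neg (w ^ (-D))]
        gcongr
    _ = w ^ (D * ((v - u) / u)) * t ^ v := by rw [← ENNReal.rpow_mul, neg_mul_neg]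
    _ ≤ w ^ v * t ^ v := by
        gcongr
    _ ≤ _ := le_self_add

lemma rpow_le_rpow_mul_add_of_le {t T w : ℝ≥0∞} {u v D : ℝ} (htT : t ≤ T) (hT : 1 ≤ T)
    (hT_top : T ≠ ⊤) (hw : 1 ≤ w) (hu : 0 < u) (hv : 0 < v) (hD : D * |1 / u - 1 / v| ≤ 1) :
    t ^ u ≤ T ^ u * (w ^ v * t ^ v + w ^ (-D)) := by
  have hT0 : T ≠ 0 := (zero_lt_one.trans_le hT).ne'
  calc t ^ u = T ^ u * (t / T) ^ u := by
        rw [← mul_rpow_of_nonneg _ _ hu.le, ENNReal.mul_div_cancel hT0 hT_top]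
    _ ≤ T ^ u * (w ^ v * (t / T) ^ v + w ^ (-D)) := by
        gcongr
        exact rpow_le_rpow_mul_rpow_add_rpow_neg (ENNReal.div_le_of_le_mul (by simpa)) hw hu hv hD
    _ ≤ T ^ u * (w ^ v * t ^ v + w ^ (-D)) := by
        gcongr
        exact ENNReal.div_le_of_le_mul (le_mul_of_one_le_right' hT)

section LayerCake

variable {X : Type*} [MeasurableSpace X] {μ : Measure X} {F g : X → ℝ≥0∞} {s : ℝ}

lemma lintegral_rpow_eq_lintegral_meas_ofReal_lt (hF : AEMeasurable F μ) (hs : 0 < s) :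
    ∫⁻ x, F x ^ s ∂μ = ENNReal.ofReal s *
      ∫⁻ t in Set.Ioi (0 : ℝ), μ {x | ENNReal.ofReal t < F x} * ENNReal.ofReal (t ^ (s - 1)) := by
  by_cases hF_top : μ {x | F x = ⊤} = 0
  · have hF_lt : ∀ᵐ x ∂μ, F x ≠ ⊤ := by simpa [ae_iff] using hF_top
    have hpow : ∀ᵐ x ∂μ, F x ^ s = ENNReal.ofReal ((F x).toReal ^ s) := by
      filter_upwards [hF_lt] with x hx
      rw [← ENNReal.ofReal_rpow_of_nonneg toReal_nonneg hs.le, ofReal_toReal hx]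
    have hmeas (t : ℝ) (ht : 0 < t) :
        μ {x | t < (F x).toReal} = μ {x | ENNReal.ofReal t < F x} := by
      refine measure_congr ?_
      filter_upwards [hF_lt] with x hx
      exact propext (ofReal_lt_iff_lt_toReal ht.le hx).symm
    rw [lintegral_congr_ae hpow, lintegral_rpow_eq_lintegral_meas_lt_mul μ
      (.of_forall fun _ => toReal_nonneg) hF.ennreal_toReal hs]
    congr 1
    exact setLIntegral_congr_fun measurableSet_Ioi fun t ht => by simp only [hmeas t ht]
  · have hpow_top : ∫⁻ t in Set.Ioi (0 : ℝ), ENNReal.ofReal (t ^ (s - 1)) = ⊤ := by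
      by_contra h
      refine not_integrableOn_Ioi_rpow (s - 1)
        ((lintegral_ofReal_ne_top_iff_integrable ?_ ?_).1 h)
      · exact (Measurable.pow_const measurable_id _).aestronglyMeasurable
      · exact (ae_restrict_mem measurableSet_Ioi).mono fun t ht => Real.rpow_nonneg (le_of_lt ht) _
    have hle : μ {x | F x = ⊤} * ⊤ ≤
        ∫⁻ t in Set.Ioi (0 : ℝ), μ {x | ENNReal.ofReal t < F x} * ENNReal.ofReal (t ^ (s - 1)) := by
      calc μ {x | F x = ⊤} * ⊤
          = μ {x | F x = ⊤} * ∫⁻ t in Set.Ioi (0 : ℝ), ENNReal.ofReal (t ^ (s - 1)) := by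
            rw [hpow_top]
        _ ≤ _ := lintegral_const_mul_le _ _
        _ ≤ _ := by
            refine lintegral_mono fun t => mul_le_mul_left (measure_mono ?_) _
            exact fun x hx => (ofReal_lt_top.trans_eq hx.symm : ENNReal.ofReal t < F x)
    rw [ENNReal.mul_top hF_top, top_le_iff] at hle
    rw [hle, ENNReal.mul_top (by simpa using hs)]
    refine lintegral_eq_top_of_measure_eq_top_ne_zero (hF.pow_const s) ?_
    simpa [ENNReal.rpow_eq_top_iff_of_pos hs] using hF_top

-- Fubini for the level sets, in the form of two layer cake formulas: for `μ` and for `g • μ`.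
lemma lintegral_rpow_le_of_meas_lt_le (hF : AEMeasurable F μ) (hg : AEMeasurable g μ) (hs : 1 < s)
    (h : ∀ t : ℝ, 0 < t → ENNReal.ofReal t * μ {x | ENNReal.ofReal t < F x} ≤
      ∫⁻ x in {x | ENNReal.ofReal t < g x}, g x ∂μ) :
    ∫⁻ x, F x ^ s ∂μ ≤ ENNReal.ofReal (s / (s - 1)) * ∫⁻ x, g x ^ s ∂μ := by
  have hs' : 0 < s - 1 := sub_pos.2 hs
  set ν := μ.withDensity g
  have hlevel (t : ℝ) : ν {x | ENNReal.ofReal t < g x} =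
      ∫⁻ x in {x | ENNReal.ofReal t < g x}, g x ∂μ :=
    withDensity_apply₀ _ (nullMeasurableSet_lt aemeasurable_const hg)
  have hmoment : ∫⁻ x, g x ^ (s - 1) ∂ν = ∫⁻ x, g x ^ s ∂μ := by
    rw [lintegral_withDensity_eq_lintegral_mul₀ hg (hg.pow_const _)]
    refine lintegral_congr fun x => ?_
    rw [Pi.mul_apply]
    nth_rw 1 [← ENNReal.rpow_one (g x)]
    rw [← ENNReal.rpow_add_of_nonneg _ _ zero_le_one hs'.le, add_sub_cancel]
  calc ∫⁻ x, F x ^ s ∂μ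
      = ENNReal.ofReal s * ∫⁻ t in Set.Ioi (0 : ℝ),
          μ {x | ENNReal.ofReal t < F x} * ENNReal.ofReal (t ^ (s - 1)) :=
        lintegral_rpow_eq_lintegral_meas_ofReal_lt hF (by linarith)
    _ ≤ ENNReal.ofReal s * ∫⁻ t in Set.Ioi (0 : ℝ),
          ν {x | ENNReal.ofReal t < g x} * ENNReal.ofReal (t ^ (s - 1 - 1)) := by
        refine mul_right_mono (setLIntegral_mono_ae' measurableSet_Ioi (.of_forall fun t ht => ?_))
        have hpow : ENNReal.ofReal (t ^ (s - 1)) =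
            ENNReal.ofReal t * ENNReal.ofReal (t ^ (s - 1 - 1)) := by
          rw [← ofReal_mul (le_of_lt ht), Real.rpow_sub_one (ne_of_gt ht) (s - 1),
            mul_div_cancel₀ _ (ne_of_gt ht)]
        rw [hpow, mul_left_comm, ← mul_assoc, hlevel]
        gcongr
        exact h t ht
    _ = ENNReal.ofReal (s / (s - 1)) * ∫⁻ x, g x ^ s ∂μ := by
        rw [← hmoment, lintegral_rpow_eq_lintegral_meas_ofReal_lt
          (hg.mono_ac (withDensity_absolutelyContinuous μ g)) hs', ← mul_assoc,
          ← ofReal_mul (by positivity), div_mul_cancel₀ _ hs'.ne']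

end LayerCake

section MaximalFunction

variable {X : Type*} [MeasurableSpace X] {μ : Measure X} {g h : X → ℝ≥0∞} {a b s : ℝ} {c : ℝ≥0∞}

lemma laverage_rpow_le_laverage_rpow (hg : AEMeasurable g μ) (hs : 1 ≤ s) :
    (⨍⁻ x, g x ∂μ) ^ s ≤ ⨍⁻ x, g x ^ s ∂μ := by
  have hs0 : 0 < s := zero_lt_one.trans_le hs
  have huniv : ((μ Set.univ)⁻¹ • μ) Set.univ ≤ 1 := by
    simp
  have hle := eLpNorm'_le_eLpNorm'_mul_rpow_measure_univ zero_lt_one hs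
    (hg.smul_measure (μ Set.univ)⁻¹).aestronglyMeasurable
  simp only [eLpNorm', enorm_eq_self, ENNReal.rpow_one, div_one] at hle
  rw [laverage, laverage, ← ENNReal.rpow_le_rpow_iff (z := 1 / s) (by positivity)]
  rw [← ENNReal.rpow_mul, mul_one_div_cancel hs0.ne', ENNReal.rpow_one]
  refine hle.trans (mul_le_of_le_one_right' (rpow_le_one huniv ?_))
  simpa using inv_le_one_of_one_le₀ hs

variable [PseudoMetricSpace X]

/-- The fractional maximal function of order `a` of `g ≥ 0` over the balls with radius an integer
power of `b`. The paper's `M_α` is the case `a = α / n`, `b = p`, its factor `|B| ^ (a - 1) ∫_B g`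
being written here as `|B| ^ a` times the average of `g` over `B`. -/
def fracMaximal (μ : Measure X) (b a : ℝ) (g : X → ℝ≥0∞) (x : X) : ℝ≥0∞ :=
  ⨆ γ : ℤ, μ (Metric.closedBall x (b ^ γ)) ^ a * ⨍⁻ y in Metric.closedBall x (b ^ γ), g y ∂μ

lemma fracMaximal_add_le (hg : AEMeasurable g μ) (x : X) :
    fracMaximal μ b a (g + h) x ≤ fracMaximal μ b a g x + fracMaximal μ b a h x := by
  refine iSup_le fun γ => ?_
  have hadd : ⨍⁻ y in Metric.closedBall x (b ^ γ), (g + h) y ∂μ =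
      ⨍⁻ y in Metric.closedBall x (b ^ γ), g y ∂μ +
        ⨍⁻ y in Metric.closedBall x (b ^ γ), h y ∂μ :=
    lintegral_add_left' (hg.restrict.smul_measure _) _
  rw [hadd, mul_add]
  exact add_le_add (le_iSup_of_le γ le_rfl) (le_iSup_of_le γ le_rfl)

lemma fracMaximal_div {η : ℝ≥0∞} (hη : η ≠ 0) (x : X) :
    fracMaximal μ b a (fun y => g y / η) x = fracMaximal μ b a g x / η := by
  simp only [fracMaximal, setLAverage_eq, div_eq_mul_inv,
    lintegral_mul_const' _ _ (ENNReal.inv_ne_top.2 hη), ENNReal.iSup_mul, mul_assoc,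
    mul_comm η⁻¹]

lemma fracMaximal_zero_le_of_forall_le (hg : ∀ x, g x ≤ c) (x : X) :
    fracMaximal μ b 0 g x ≤ c := by
  refine iSup_le fun γ => ?_
  rw [ENNReal.rpow_zero, one_mul]
  exact (laverage_le_essSup _).trans (essSup_le_of_ae_le _ (.of_forall hg))

variable [IsUltrametricDist X]

lemma measurable_fracMaximal [OpensMeasurableSpace X] (hb : 0 < b) :
    Measurable (fracMaximal μ b a g) := by
  refine .iSup fun γ => Continuous.measurable (IsLocallyConstant.continuous ?_)
  refine (IsLocallyConstant.iff_exists_open _).2 fun x =>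
    ⟨Metric.closedBall x (b ^ γ), IsUltrametricDist.isOpen_closedBall x (zpow_pos hb γ).ne',
      Metric.mem_closedBall_self (zpow_pos hb γ).le, fun y hy => ?_⟩
  rw [IsUltrametricDist.closedBall_eq_of_mem hy]

/-- The balls with radius `b ^ γ`, `γ ≤ N`, over which the average of `g` exceeds `c`. -/
def largeAverageBalls (μ : Measure X) (b : ℝ) (g : X → ℝ≥0∞) (c : ℝ≥0∞) (N : ℤ) : Set (Set X) :=
  {B | ∃ x, ∃ γ ≤ N, B = Metric.closedBall x (b ^ γ) ∧ c < ⨍⁻ y in B, g y ∂μ}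

lemma exists_maximal_largeAverageBalls (hb : 1 < b) {N γ : ℤ} {x : X} (hγ : γ ≤ N)
    (hc : c < ⨍⁻ y in Metric.closedBall x (b ^ γ), g y ∂μ) :
    ∃ B, Maximal (· ∈ largeAverageBalls μ b g c N) B ∧ x ∈ B := by
  obtain ⟨γ₀, ⟨hγ₀N, hγ₀⟩, hmax⟩ := Int.exists_greatest_of_bdd
    (P := fun γ => γ ≤ N ∧ c < ⨍⁻ y in Metric.closedBall x (b ^ γ), g y ∂μ)
    ⟨N, fun _ h => h.1⟩ ⟨γ, hγ, hc⟩
  have hx (γ : ℤ) : x ∈ Metric.closedBall x (b ^ γ) :=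
    Metric.mem_closedBall_self (zpow_nonneg (zero_le_one.trans hb.le) γ)
  refine ⟨_, ⟨⟨x, γ₀, hγ₀N, rfl, hγ₀⟩, ?_⟩, hx γ₀⟩
  rintro _ ⟨y, γ', hγ'N, rfl, hγ'⟩ hle
  have hball : Metric.closedBall y (b ^ γ') = Metric.closedBall x (b ^ γ') :=
    IsUltrametricDist.closedBall_eq_of_mem (hle (hx γ₀))
  rw [hball] at hγ' ⊢
  exact Metric.closedBall_subset_closedBall (zpow_le_zpow_right₀ hb.le (hmax γ' ⟨hγ'N, hγ'⟩))

lemma pairwiseDisjoint_maximal_largeAverageBalls {N : ℤ} :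
    {B | Maximal (· ∈ largeAverageBalls μ b g c N) B}.PairwiseDisjoint id := by
  intro B hB B' hB' hne
  obtain ⟨x, γ, -, hBx, -⟩ := hB.prop
  obtain ⟨x', γ', -, hBx', -⟩ := hB'.prop
  have htri : B ⊆ B' ∨ B' ⊆ B ∨ Disjoint B B' := by
    rw [hBx, hBx']
    exact IsUltrametricDist.closedBall_subset_trichotomy x x' _ _
  rcases htri with hle | hle | hdisj
  · exact (hne (hle.antisymm (hB.le_of_ge hB'.prop hle))).elim
  · exact (hne ((hB'.le_of_ge hB.prop hle).antisymm hle)).elim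
  · exact hdisj

variable [OpensMeasurableSpace X] [TopologicalSpace.SeparableSpace X]

-- In an ultrametric space the maximal balls are already disjoint: no covering constant appears.
lemma mul_measure_exists_lt_setLAverage_le (hb : 1 < b) (N : ℤ) :
    c * μ {x | ∃ γ ≤ N, c < ⨍⁻ y in Metric.closedBall x (b ^ γ), g y ∂μ} ≤ ∫⁻ x, g x ∂μ := by
  set S := {B | Maximal (· ∈ largeAverageBalls μ b g c N) B}
  have hb0 (γ : ℤ) : 0 < b ^ γ := zpow_pos (zero_lt_one.trans hb) γ
  have hdisj : S.PairwiseDisjoint id := pairwiseDisjoint_maximal_largeAverageBalls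
  have hopen (B) (hB : B ∈ S) : IsOpen B := by
    obtain ⟨x, γ, -, rfl, -⟩ := hB.prop
    exact IsUltrametricDist.isOpen_closedBall x (hb0 γ).ne'
  have hne (B) (hB : B ∈ S) : B.Nonempty := by
    obtain ⟨x, γ, -, rfl, -⟩ := hB.prop
    exact Metric.nonempty_closedBall.2 (hb0 γ).le
  have hcount : S.Countable := hdisj.countable_of_isOpen hopen hne
  have hcover : {x | ∃ γ ≤ N, c < ⨍⁻ y in Metric.closedBall x (b ^ γ), g y ∂μ} ⊆ ⋃ B ∈ S, B := by
    rintro x ⟨γ, hγ, hx⟩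
    obtain ⟨B, hB, hxB⟩ := exists_maximal_largeAverageBalls hb hγ hx
    exact Set.mem_biUnion hB hxB
  have := hcount.to_subtype
  calc c * μ {x | ∃ γ ≤ N, c < ⨍⁻ y in Metric.closedBall x (b ^ γ), g y ∂μ}
      ≤ c * ∑' B : S, μ B := by
        gcongr
        exact (measure_mono hcover).trans (measure_biUnion_le μ hcount _)
    _ = ∑' B : S, c * μ B := ENNReal.tsum_mul_left.symm
    _ ≤ ∑' B : S, ∫⁻ x in B, g x ∂μ := by
        refine ENNReal.tsum_le_tsum fun B => ?_
        obtain ⟨-, -, -, -, hB⟩ := B.2.prop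
        rw [setLAverage_eq] at hB
        exact ENNReal.mul_le_of_le_div hB.le
    _ = ∫⁻ x in ⋃ B ∈ S, B, g x ∂μ :=
        (lintegral_biUnion hcount (fun B hB => (hopen B hB).measurableSet) hdisj g).symm
    _ ≤ ∫⁻ x, g x ∂μ := setLIntegral_le_lintegral _ _

lemma mul_measure_lt_fracMaximal_zero_le (hb : 1 < b) :
    c * μ {x | c < fracMaximal μ b 0 g x} ≤ ∫⁻ x, g x ∂μ := by
  set U : ℤ → Set X := fun N => {x | ∃ γ ≤ N, c < ⨍⁻ y in Metric.closedBall x (b ^ γ), g y ∂μ}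
  have hU_mono : Monotone U := fun N N' hN x ⟨γ, hγ, hx⟩ => ⟨γ, hγ.trans hN, hx⟩
  have hU : {x | c < fracMaximal μ b 0 g x} = ⋃ N, U N := by
    ext x
    simp only [fracMaximal, ENNReal.rpow_zero, one_mul, Set.mem_iUnion, Set.mem_ofPred_eq, U,
      lt_iSup_iff]
    exact ⟨fun ⟨γ, hγ⟩ => ⟨γ, γ, le_rfl, hγ⟩, fun ⟨_, γ, _, hγ⟩ => ⟨γ, hγ⟩⟩
  rw [hU, hU_mono.measure_iUnion, ENNReal.mul_iSup]
  exact iSup_le fun N => mul_measure_exists_lt_setLAverage_le hb N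

lemma mul_measure_two_mul_lt_fracMaximal_zero_le (hb : 1 < b) (hg : Measurable g) :
    c * μ {x | 2 * c < fracMaximal μ b 0 g x} ≤ ∫⁻ x in {x | c < g x}, g x ∂μ := by
  have hA : MeasurableSet {x | c < g x} := measurableSet_lt measurable_const hg
  set A := {x | c < g x}
  have hsplit (x : X) : fracMaximal μ b 0 g x ≤ fracMaximal μ b 0 (A.indicator g) x + c := by
    calc fracMaximal μ b 0 g x
        = fracMaximal μ b 0 (A.indicator g + Aᶜ.indicator g) x := by
          rw [Set.indicator_self_add_compl]
      _ ≤ fracMaximal μ b 0 (A.indicator g) x + fracMaximal μ b 0 (Aᶜ.indicator g) x :=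
          fracMaximal_add_le (hg.indicator hA).aemeasurable x
      _ ≤ fracMaximal μ b 0 (A.indicator g) x + c := by
          gcongr
          refine fracMaximal_zero_le_of_forall_le (fun y => ?_) x
          exact Set.indicator_apply_le' (fun hy => not_lt.1 hy) fun _ => zero_le
  calc c * μ {x | 2 * c < fracMaximal μ b 0 g x}
      ≤ c * μ {x | c < fracMaximal μ b 0 (A.indicator g) x} := by
        refine mul_le_mul_right (measure_mono fun x hx => ?_) c
        exact lt_of_add_lt_add_right ((two_mul c ▸ hx).trans_le (hsplit x))
    _ ≤ ∫⁻ x, A.indicator g x ∂μ := mul_measure_lt_fracMaximal_zero_le hb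
    _ = ∫⁻ x in A, g x ∂μ := lintegral_indicator hA g

lemma lintegral_fracMaximal_zero_rpow_le (hb : 1 < b) (hg : Measurable g) (hs : 1 < s) :
    ∫⁻ x, fracMaximal μ b 0 g x ^ s ∂μ ≤
      2 ^ s * ENNReal.ofReal (s / (s - 1)) * ∫⁻ x, g x ^ s ∂μ := by
  have hs0 : 0 < s := zero_lt_one.trans hs
  have hM : Measurable (fracMaximal μ b 0 g) := measurable_fracMaximal (zero_lt_one.trans hb)
  have hhalf : ∫⁻ x, (fracMaximal μ b 0 g x / 2) ^ s ∂μ ≤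
      ENNReal.ofReal (s / (s - 1)) * ∫⁻ x, g x ^ s ∂μ := by
    refine lintegral_rpow_le_of_meas_lt_le (hM.div_const 2).aemeasurable hg.aemeasurable hs
      fun t _ => ?_
    simp only [ENNReal.lt_div_iff_mul_lt (.inl two_ne_zero) (.inl ofNat_ne_top)]
    simpa only [mul_comm _ (2 : ℝ≥0∞)] using mul_measure_two_mul_lt_fracMaximal_zero_le hb hg
  calc ∫⁻ x, fracMaximal μ b 0 g x ^ s ∂μ
      = 2 ^ s * ∫⁻ x, (fracMaximal μ b 0 g x / 2) ^ s ∂μ := by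
        rw [← lintegral_const_mul _ ((hM.div_const 2).pow_const s)]
        refine lintegral_congr fun x => ?_
        rw [← mul_rpow_of_nonneg _ _ hs0.le, ENNReal.mul_div_cancel two_ne_zero ofNat_ne_top]
    _ ≤ _ := by
        rw [mul_assoc]
        gcongr

lemma ae_forall_closedBall_of_forall_ae_restrict (hb : 0 < b) {P : Set X → X → Prop}
    (hP : ∀ (x : X) (γ : ℤ), ∀ᵐ y ∂μ.restrict (Metric.closedBall x (b ^ γ)),
      P (Metric.closedBall x (b ^ γ)) y) :
    ∀ᵐ x ∂μ, ∀ γ : ℤ, P (Metric.closedBall x (b ^ γ)) x := by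
  refine ae_all_iff.2 fun γ => ?_
  obtain ⟨D, hD_count, hD_dense⟩ := TopologicalSpace.exists_countable_dense X
  have hball (d : X) : MeasurableSet (Metric.closedBall d (b ^ γ)) :=
    (IsUltrametricDist.isOpen_closedBall d (zpow_pos hb γ).ne').measurableSet
  have hae : ∀ᵐ x ∂μ, ∀ d ∈ D, x ∈ Metric.closedBall d (b ^ γ) →
      P (Metric.closedBall d (b ^ γ)) x :=
    (ae_ball_iff hD_count).2 fun d _ => (ae_restrict_iff' (hball d)).1 (hP d γ)
  filter_upwards [hae] with x hx
  obtain ⟨d, hd, hxd⟩ := hD_dense.exists_dist_lt x (zpow_pos hb γ)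
  rw [← IsUltrametricDist.closedBall_eq_of_mem (Metric.mem_closedBall.2 hxd.le)]
  exact hx d hd (Metric.mem_closedBall.2 hxd.le)

end MaximalFunction

section VariableExponent

variable {X : Type*} [MeasurableSpace X] {μ : Measure X} {g : X → ℝ≥0∞} {r q : X → ℝ}
  {a b s R r₀ q₀ : ℝ}

section LargeValues

lemma measure_mul_setLAverage_le (B : Set X) : μ B * ⨍⁻ y in B, g y ∂μ ≤ ∫⁻ y in B, g y ∂μ := by
  rw [setLAverage_eq]
  exact ENNReal.mul_div_le

lemma laverage_rpow_div_rpow_le (hg : Measurable g) (hr : Measurable r) (hs : 1 ≤ s) :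
    (⨍⁻ x, g x ^ (r x / s) ∂μ) ^ s ≤ ⨍⁻ x, g x ^ r x ∂μ := by
  calc (⨍⁻ x, g x ^ (r x / s) ∂μ) ^ s ≤ ⨍⁻ x, (g x ^ (r x / s)) ^ s ∂μ :=
        laverage_rpow_le_laverage_rpow (hg.pow (hr.div_const s)).aemeasurable hs
    _ = ⨍⁻ x, g x ^ r x ∂μ := by
        simp_rw [← ENNReal.rpow_mul, div_mul_cancel₀ _ (zero_lt_one.trans_le hs).ne']

-- With `A` the average of `g` and `H` that of `g ^ (r / s)`, Jensen's inequality gives both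
-- `A ^ (ρ / s) ≤ H` and `H ^ s ≤ 1 / |B|`; the surplus `t - ρ` in the exponent is paid by `L`.
lemma setLAverage_rpow_le_mul {B : Set X} {ρ t : ℝ} {L : ℝ≥0∞} (hg : Measurable g)
    (hr : Measurable r) (hs : 1 ≤ s) (hsρ : s ≤ ρ) (hρt : ρ ≤ t)
    (hρr : ∀ᵐ y ∂μ.restrict B, ρ ≤ r y) (hg_one : ∀ y, g y = 0 ∨ 1 ≤ g y)
    (hint : ∫⁻ y in B, g y ^ r y ∂μ ≤ 1) (hL : 1 ≤ L) (hμ : μ B ^ (ρ - t) ≤ L) :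
    (⨍⁻ y in B, g y ∂μ) ^ t ≤ L * (⨍⁻ y in B, g y ^ (r y / s) ∂μ) ^ s := by
  have hs0 : 0 < s := zero_lt_one.trans_le hs
  have hρ0 : 0 < ρ := hs0.trans_le hsρ
  set A := ⨍⁻ y in B, g y ∂μ
  set H := ⨍⁻ y in B, g y ^ (r y / s) ∂μ
  have hAH : A ^ (ρ / s) ≤ H := by
    refine (laverage_rpow_le_laverage_rpow hg.aemeasurable ((one_le_div hs0).2 hsρ)).trans
      (laverage_mono_ae ?_)
    filter_upwards [hρr] with y hy
    rcases hg_one y with h0 | h1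
    · simp [h0, div_pos hρ0 hs0]
    · exact ENNReal.rpow_le_rpow_of_exponent_le h1 (by gcongr)
  have hH : H ^ s ≤ (μ B)⁻¹ := by
    refine (laverage_rpow_div_rpow_le hg hr hs).trans ?_
    rw [setLAverage_eq, ← one_div]
    gcongr
  calc A ^ t = (A ^ (ρ / s)) ^ (s + s * ((t - ρ) / ρ)) := by
        rw [← ENNReal.rpow_mul]
        congr 1
        field_simp
        ring
    _ ≤ H ^ (s + s * ((t - ρ) / ρ)) := by gcongr
    _ = H ^ s * (H ^ s) ^ ((t - ρ) / ρ) := by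
        rw [ENNReal.rpow_add_of_nonneg _ _ hs0.le (by positivity), ENNReal.rpow_mul]
    _ ≤ H ^ s * ((μ B)⁻¹) ^ ((t - ρ) / ρ) := by gcongr
    _ = H ^ s * (μ B ^ (ρ - t)) ^ (1 / ρ) := by
        rw [ENNReal.inv_rpow, ← ENNReal.rpow_neg, ← ENNReal.rpow_mul, ← neg_div, neg_sub,
          mul_one_div]
    _ ≤ H ^ s * L ^ (1 : ℝ) := by
        gcongr
        exact (ENNReal.rpow_le_rpow hμ (by positivity)).trans
          (ENNReal.rpow_le_rpow_of_exponent_le hL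
            ((div_le_one hρ0).2 (hs.trans hsρ)))
    _ = L * H ^ s := by rw [ENNReal.rpow_one, mul_comm]

variable [PseudoMetricSpace X]

-- Hedberg's trick.
lemma fracMaximal_rpow_le_mul_rpow {x : X} {M K : ℝ≥0∞} (ha : 0 ≤ a) (hr : 0 ≤ r₀)
    (hq : 0 < q₀) (hrq : q₀ = r₀ + r₀ * (a * q₀))
    (hM : ∀ γ : ℤ, (⨍⁻ y in Metric.closedBall x (b ^ γ), g y ∂μ) ^ r₀ ≤ M)
    (hK : ∀ γ : ℤ, μ (Metric.closedBall x (b ^ γ)) *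
      (⨍⁻ y in Metric.closedBall x (b ^ γ), g y ∂μ) ^ r₀ ≤ K) :
    fracMaximal μ b a g x ^ q₀ ≤ M * K ^ (a * q₀) := by
  rw [← ENNReal.le_rpow_inv_iff hq]
  refine iSup_le fun γ => (ENNReal.le_rpow_inv_iff hq).2 ?_
  rw [rpow_mul_rpow_eq_rpow_mul ha hq.le hr hrq]
  gcongr
  exacts [hM γ, hK γ]

/-- Diening's form of the local log-Hölder condition for the exponent `r`: the powers
`|B| ^ (r₋(B) - r₊(B))` are bounded uniformly over the balls with radius an integer power of
`b`. -/
def DieningCondition (μ : Measure X) (b : ℝ) (r : X → ℝ) : Prop :=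
  ∃ L : ℝ≥0∞, L ≠ ⊤ ∧ ∀ (x : X) (γ : ℤ),
    μ (Metric.closedBall x (b ^ γ)) ^ (essInf r (μ.restrict (Metric.closedBall x (b ^ γ))) -
      essSup r (μ.restrict (Metric.closedBall x (b ^ γ)))) ≤ L

lemma rpow_neg_le_of_one_le_of_rpow_neg_le {m L : ℝ≥0∞} {u v : ℝ} (hL : 1 ≤ L) (hu : 0 ≤ u)
    (huv : u ≤ v) (hm : m ^ (-v) ≤ L) : m ^ (-u) ≤ L := by
  rcases le_or_gt 1 m with hm1 | hm1
  · rw [ENNReal.rpow_neg]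
    exact (ENNReal.inv_le_one.2 (by simpa using ENNReal.rpow_le_rpow hm1 hu)).trans hL
  · exact (ENNReal.rpow_le_rpow_of_exponent_ge hm1.le (neg_le_neg huv)).trans hm

variable [IsUltrametricDist X] [OpensMeasurableSpace X] [TopologicalSpace.SeparableSpace X]

lemma ae_essInf_le_and_le_essSup_closedBall (hb : 0 < b) (hsr : ∀ᵐ x ∂μ, s ≤ r x)
    (hrR : ∀ᵐ x ∂μ, r x ≤ R) :
    ∀ᵐ x ∂μ, ∀ γ : ℤ, essInf r (μ.restrict (Metric.closedBall x (b ^ γ))) ≤ r x ∧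
      r x ≤ essSup r (μ.restrict (Metric.closedBall x (b ^ γ))) :=
  ae_forall_closedBall_of_forall_ae_restrict hb
    (P := fun B x => essInf r (μ.restrict B) ≤ r x ∧ r x ≤ essSup r (μ.restrict B)) fun _ _ =>
    (ae_essInf_le (Filter.isBoundedUnder_of_eventually_ge (ae_restrict_of_ae hsr))).and
      (ae_le_essSup (Filter.isBoundedUnder_of_eventually_le (ae_restrict_of_ae hrR)))

lemma DieningCondition.exists_setLAverage_rpow_le (hr_loc : DieningCondition μ b r) (hb : 0 < b)
    (hr : Measurable r) (hs : 1 ≤ s) (hsr : ∀ᵐ x ∂μ, s ≤ r x) (hrR : ∀ᵐ x ∂μ, r x ≤ R) :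
    ∃ L : ℝ≥0∞, 1 ≤ L ∧ L ≠ ⊤ ∧ ∀ g : X → ℝ≥0∞, Measurable g → (∀ x, g x = 0 ∨ 1 ≤ g x) →
      ∫⁻ x, g x ^ r x ∂μ ≤ 1 → ∀ᵐ x ∂μ, ∀ γ : ℤ,
        (⨍⁻ y in Metric.closedBall x (b ^ γ), g y ∂μ) ^ r x ≤
          L * (⨍⁻ y in Metric.closedBall x (b ^ γ), g y ^ (r y / s) ∂μ) ^ s := by
  obtain ⟨L, hL_top, hL⟩ := hr_loc
  refine ⟨max 1 L, le_max_left _ _, max_ne_top one_ne_top hL_top,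
    fun g hg hg_one hint => ?_⟩
  filter_upwards [hsr, ae_essInf_le_and_le_essSup_closedBall hb hsr hrR] with x hsx hx γ
  set B := Metric.closedBall x (b ^ γ)
  have hle : ∀ᵐ y ∂μ.restrict B, max s (essInf r (μ.restrict B)) ≤ r y := by
    have hsr' := ae_restrict_of_ae (s := B) hsr
    filter_upwards [hsr', ae_essInf_le (Filter.isBoundedUnder_of_eventually_ge hsr')] with y h₁ h₂
    exact max_le h₁ h₂
  refine setLAverage_rpow_le_mul hg hr hs (le_max_left _ _) (max_le hsx (hx γ).1) hle hg_one
    ((setLIntegral_le_lintegral _ _).trans hint) (le_max_left _ _) ?_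
  rw [← neg_sub]
  refine rpow_neg_le_of_one_le_of_rpow_neg_le (le_max_left _ _)
    (sub_nonneg.2 (max_le hsx (hx γ).1)) (sub_le_sub (hx γ).2 (le_max_right _ _)) ?_
  rw [neg_sub]
  exact (hL x γ).trans (le_max_right _ _)

lemma DieningCondition.exists_fracMaximal_rpow_le (hr_loc : DieningCondition μ b r)
    (hb : 0 < b) (hr : Measurable r) (ha : 0 ≤ a) (hs : 1 ≤ s) (hsr : ∀ᵐ x ∂μ, s ≤ r x)
    (hrR : ∀ᵐ x ∂μ, r x ≤ R) (haR : a * R < 1) (hrq : ∀ᵐ x ∂μ, 1 / q x = 1 / r x - a) :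
    ∃ K : ℝ≥0∞, K ≠ ⊤ ∧ ∀ g : X → ℝ≥0∞, Measurable g → (∀ x, g x = 0 ∨ 1 ≤ g x) →
      ∫⁻ x, g x ^ r x ∂μ ≤ 1 → ∀ᵐ x ∂μ,
        fracMaximal μ b a g x ^ q x ≤ K * fracMaximal μ b 0 (fun y => g y ^ (r y / s)) x ^ s := by
  obtain ⟨L, hL_one, hL_top, hL⟩ := hr_loc.exists_setLAverage_rpow_le hb hr hs hsr hrR
  refine ⟨L * L ^ (a * (R / (1 - a * R))),
    mul_ne_top hL_top (rpow_ne_top_of_ne_zero (zero_lt_one.trans_le hL_one).ne' hL_top),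
    fun g hg hg_one hint => ?_⟩
  filter_upwards [hL g hg hg_one hint, hsr, hrR, hrq] with x hx hsx hxR hxq
  have hr0 : 0 < r x := (zero_lt_one.trans_le hs).trans_le hsx
  have har : a * r x < 1 := (mul_le_mul_of_nonneg_left hxR ha).trans_lt haR
  set M := fracMaximal μ b 0 (fun y => g y ^ (r y / s)) x
  have hM (γ : ℤ) : ⨍⁻ y in Metric.closedBall x (b ^ γ), g y ^ (r y / s) ∂μ ≤ M := by
    refine le_iSup_of_le γ ?_
    rw [ENNReal.rpow_zero, one_mul]
  have hK (γ : ℤ) : μ (Metric.closedBall x (b ^ γ)) *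
      (⨍⁻ y in Metric.closedBall x (b ^ γ), g y ∂μ) ^ r x ≤ L := by
    set B := Metric.closedBall x (b ^ γ)
    calc μ B * (⨍⁻ y in B, g y ∂μ) ^ r x
        ≤ μ B * (L * ⨍⁻ y in B, g y ^ r y ∂μ) := by
          gcongr
          exact (hx γ).trans (mul_le_mul_right (laverage_rpow_div_rpow_le hg hr hs) L)
      _ = L * (μ B * ⨍⁻ y in B, g y ^ r y ∂μ) := mul_left_comm _ _ _
      _ ≤ L := mul_le_of_le_one_right' ((measure_mul_setLAverage_le B).trans
          ((setLIntegral_le_lintegral _ _).trans hint))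
  calc fracMaximal μ b a g x ^ q x
      ≤ (L * M ^ s) * L ^ (a * q x) :=
        fracMaximal_rpow_le_mul_rpow ha hr0.le (pos_of_one_div_eq_sub hr0 har hxq)
          (eq_add_mul_of_one_div_eq_sub hr0 har hxq)
          (fun γ => (hx γ).trans (by gcongr; exact hM γ)) hK
    _ = L * L ^ (a * q x) * M ^ s := mul_right_comm _ _ _
    _ ≤ L * L ^ (a * (R / (1 - a * R))) * M ^ s := by
        gcongr
        exact le_div_of_one_div_eq_sub ha hr0 hxR haR hxq

lemma DieningCondition.exists_lintegral_fracMaximal_rpow_le (hr_loc : DieningCondition μ b r)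
    (hb : 1 < b) (hr : Measurable r) (ha : 0 ≤ a) (hs : 1 < s) (hsr : ∀ᵐ x ∂μ, s ≤ r x)
    (hrR : ∀ᵐ x ∂μ, r x ≤ R) (haR : a * R < 1) (hrq : ∀ᵐ x ∂μ, 1 / q x = 1 / r x - a) :
    ∃ K : ℝ≥0∞, K ≠ ⊤ ∧ ∀ g : X → ℝ≥0∞, Measurable g → (∀ x, g x = 0 ∨ 1 ≤ g x) →
      ∫⁻ x, g x ^ r x ∂μ ≤ 1 → ∫⁻ x, fracMaximal μ b a g x ^ q x ∂μ ≤ K := by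
  have hs0 : 0 < s := zero_lt_one.trans hs
  have hb0 : 0 < b := zero_lt_one.trans hb
  obtain ⟨K, hK_top, hK⟩ := hr_loc.exists_fracMaximal_rpow_le hb0 hr ha hs.le hsr hrR haR hrq
  refine ⟨K * (2 ^ s * ENNReal.ofReal (s / (s - 1))), by finiteness,
    fun g hg hg_one hint => ?_⟩
  set h : X → ℝ≥0∞ := fun x => g x ^ (r x / s)
  have hh_pow : ∫⁻ x, h x ^ s ∂μ ≤ 1 := by
    simpa only [h, ← ENNReal.rpow_mul, div_mul_cancel₀ _ hs0.ne'] using hint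
  calc ∫⁻ x, fracMaximal μ b a g x ^ q x ∂μ
      ≤ ∫⁻ x, K * fracMaximal μ b 0 h x ^ s ∂μ := lintegral_mono_ae (hK g hg hg_one hint)
    _ = K * ∫⁻ x, fracMaximal μ b 0 h x ^ s ∂μ :=
        lintegral_const_mul _ ((measurable_fracMaximal hb0).pow_const s)
    _ ≤ K * (2 ^ s * ENNReal.ofReal (s / (s - 1)) * ∫⁻ x, h x ^ s ∂μ) := by
        gcongr
        exact lintegral_fracMaximal_zero_rpow_le hb (hg.pow (hr.div_const s)) hs
    _ ≤ K * (2 ^ s * ENNReal.ofReal (s / (s - 1))) :=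
        mul_le_mul_right (mul_le_of_le_one_right' hh_pow) K

end LargeValues

section SmallValues

/-- Nekvinda's comparability of two exponents: `1 / u - 1 / v` is dominated by `1 / D` where
`w ^ (-D)` is integrable for some `w ≥ 1`. For a constant `v` this is Nekvinda's decay condition
at infinity. The function `D` stands in for `|1 / u - 1 / v|⁻¹`, which has the junk value `0` where
`u = v`. -/
def NekvindaComparable (μ : Measure X) (u v : X → ℝ) : Prop :=
  ∃ (w : ℝ≥0∞) (D : X → ℝ), 1 ≤ w ∧ w ≠ ⊤ ∧ (∀ᵐ x ∂μ, D x * |1 / u x - 1 / v x| ≤ 1) ∧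
    ∫⁻ x, w ^ (-D x) ∂μ ≠ ⊤

variable {u v : X → ℝ} {U V : ℝ}

lemma NekvindaComparable.symm (h : NekvindaComparable μ u v) : NekvindaComparable μ v u := by
  simpa only [NekvindaComparable, abs_sub_comm] using h

lemma NekvindaComparable.of_one_div_sub_eq {u' v' : X → ℝ} (h : NekvindaComparable μ u v)
    (huv : ∀ᵐ x ∂μ, 1 / u' x - 1 / v' x = 1 / u x - 1 / v x) : NekvindaComparable μ u' v' := by
  obtain ⟨w, D, hw, hw_top, hD, hint⟩ := h
  refine ⟨w, D, hw, hw_top, ?_, hint⟩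
  filter_upwards [hD, huv] with x hDx hx
  rwa [hx]

lemma NekvindaComparable.exists_lintegral_rpow_le (h : NekvindaComparable μ u v)
    (hv : Measurable v) (hu0 : ∀ᵐ x ∂μ, 0 < u x) (huU : ∀ᵐ x ∂μ, u x ≤ U)
    (hv0 : ∀ᵐ x ∂μ, 0 < v x) (hvV : ∀ᵐ x ∂μ, v x ≤ V) {T I : ℝ≥0∞} (hT : 1 ≤ T)
    (hT_top : T ≠ ⊤) (hI : I ≠ ⊤) :
    ∃ K : ℝ≥0∞, K ≠ ⊤ ∧ ∀ g : X → ℝ≥0∞, Measurable g → (∀ x, g x ≤ T) →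
      ∫⁻ x, g x ^ v x ∂μ ≤ I → ∫⁻ x, g x ^ u x ∂μ ≤ K := by
  obtain ⟨w, D, hw, hw_top, hD, hint⟩ := h
  have hTU : T ^ U ≠ ⊤ := rpow_ne_top_of_ne_zero (zero_lt_one.trans_le hT).ne' hT_top
  have hwV : w ^ V ≠ ⊤ := rpow_ne_top_of_ne_zero (zero_lt_one.trans_le hw).ne' hw_top
  refine ⟨T ^ U * (w ^ V * I + ∫⁻ x, w ^ (-D x) ∂μ), by finiteness, fun g hg hgT hgI => ?_⟩
  have hpt : ∀ᵐ x ∂μ, g x ^ u x ≤ T ^ U * (w ^ V * g x ^ v x + w ^ (-D x)) := by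
    filter_upwards [hD, hu0, huU, hv0, hvV] with x hDx hux huxU hvx hvxV
    refine (rpow_le_rpow_mul_add_of_le (hgT x) hT hT_top hw hux hvx hDx).trans ?_
    gcongr
  calc ∫⁻ x, g x ^ u x ∂μ
      ≤ ∫⁻ x, T ^ U * (w ^ V * g x ^ v x + w ^ (-D x)) ∂μ := lintegral_mono_ae hpt
    _ = T ^ U * (w ^ V * ∫⁻ x, g x ^ v x ∂μ + ∫⁻ x, w ^ (-D x) ∂μ) := by
        rw [lintegral_const_mul' _ _ hTU, lintegral_add_left ((hg.pow hv).const_mul _),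
          lintegral_const_mul' _ _ hwV]
    _ ≤ T ^ U * (w ^ V * I + ∫⁻ x, w ^ (-D x) ∂μ) := by gcongr

lemma measure_mul_setLAverage_rpow_le {B : Set X} (hg : AEMeasurable g μ) (hs : 1 ≤ s) :
    μ B * (⨍⁻ y in B, g y ∂μ) ^ s ≤ ∫⁻ y, g y ^ s ∂μ :=
  calc μ B * (⨍⁻ y in B, g y ∂μ) ^ s ≤ μ B * ⨍⁻ y in B, g y ^ s ∂μ := by
        gcongr
        exact laverage_rpow_le_laverage_rpow hg.restrict hs
    _ ≤ ∫⁻ y in B, g y ^ s ∂μ := measure_mul_setLAverage_le B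
    _ ≤ ∫⁻ y, g y ^ s ∂μ := setLIntegral_le_lintegral _ _

variable [PseudoMetricSpace X]

lemma fracMaximal_le_lintegral_rpow (hg : AEMeasurable g μ) (hg_one : ∀ x, g x ≤ 1) (ha : 0 ≤ a)
    (hs : 1 ≤ s) (has : a * s ≤ 1) (x : X) :
    fracMaximal μ b a g x ≤ (∫⁻ y, g y ^ s ∂μ) ^ a := by
  refine iSup_le fun γ => ?_
  set B := Metric.closedBall x (b ^ γ)
  set A := ⨍⁻ y in B, g y ∂μ
  have hA : A ≤ 1 := (laverage_le_essSup _).trans (essSup_le_of_ae_le _ (.of_forall hg_one))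
  calc μ B ^ a * A = μ B ^ a * A ^ (s * a + (1 - a * s)) := by
        rw [mul_comm s, add_sub_cancel, ENNReal.rpow_one]
    _ = (μ B * A ^ s) ^ a * A ^ (1 - a * s) := by
        rw [ENNReal.rpow_add_of_nonneg _ _ (by positivity) (sub_nonneg.2 has), ENNReal.rpow_mul,
          mul_rpow_of_nonneg _ _ ha, mul_assoc]
    _ ≤ (μ B * A ^ s) ^ a := mul_le_of_le_one_right' (rpow_le_one hA (sub_nonneg.2 has))
    _ ≤ _ := by
        gcongr
        exact measure_mul_setLAverage_rpow_le hg hs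

variable [IsUltrametricDist X] [OpensMeasurableSpace X] [TopologicalSpace.SeparableSpace X]

lemma lintegral_fracMaximal_rpow_le (hb : 1 < b) (hg : Measurable g) (ha : 0 ≤ a) (hr : 1 < r₀)
    (har : a * r₀ < 1) (hrq : 1 / q₀ = 1 / r₀ - a) :
    ∫⁻ x, fracMaximal μ b a g x ^ q₀ ∂μ ≤ 2 ^ r₀ * ENNReal.ofReal (r₀ / (r₀ - 1)) *
      (∫⁻ x, g x ^ r₀ ∂μ) * (∫⁻ x, g x ^ r₀ ∂μ) ^ (a * q₀) := by
  have hr0 : 0 < r₀ := zero_lt_one.trans hr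
  have hpt (x : X) : fracMaximal μ b a g x ^ q₀ ≤
      fracMaximal μ b 0 g x ^ r₀ * (∫⁻ x, g x ^ r₀ ∂μ) ^ (a * q₀) := by
    refine fracMaximal_rpow_le_mul_rpow ha hr0.le (pos_of_one_div_eq_sub hr0 har hrq)
      (eq_add_mul_of_one_div_eq_sub hr0 har hrq) (fun γ => ?_)
      fun γ => measure_mul_setLAverage_rpow_le hg.aemeasurable hr.le
    gcongr
    refine le_iSup_of_le γ ?_
    rw [ENNReal.rpow_zero, one_mul]
  refine (lintegral_mono hpt).trans ?_
  rw [lintegral_mul_const _ ((measurable_fracMaximal (zero_lt_one.trans hb)).pow_const _)]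
  gcongr
  exact lintegral_fracMaximal_zero_rpow_le hb hg hr

lemma NekvindaComparable.exists_lintegral_fracMaximal_rpow_le
    (h : NekvindaComparable μ r fun _ => r₀) (hb : 1 < b) (hr : Measurable r) (ha : 0 ≤ a)
    (hr₀ : 1 < r₀) (har₀ : a * r₀ < 1) (hr0 : ∀ᵐ x ∂μ, 0 < r x) (hrR : ∀ᵐ x ∂μ, r x ≤ R)
    (haR : a * R < 1) (hrq : ∀ᵐ x ∂μ, 1 / q x = 1 / r x - a) :
    ∃ K : ℝ≥0∞, K ≠ ⊤ ∧ ∀ g : X → ℝ≥0∞, Measurable g → (∀ x, g x ≤ 1) →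
      ∫⁻ x, g x ^ r x ∂μ ≤ 1 → ∫⁻ x, fracMaximal μ b a g x ^ q x ∂μ ≤ K := by
  have hr₀0 : 0 < r₀ := zero_lt_one.trans hr₀
  set q₀ := r₀ / (1 - a * r₀)
  have hrq₀ : 1 / q₀ = 1 / r₀ - a := by
    have : 1 - a * r₀ ≠ 0 := by linarith
    simp only [q₀]
    field_simp
  have hq₀ : 0 < q₀ := pos_of_one_div_eq_sub hr₀0 har₀ hrq₀
  have hq : ∀ᵐ x ∂μ, 0 < q x ∧ q x ≤ R / (1 - a * R) := by
    filter_upwards [hr0, hrR, hrq] with x h0 hxR hx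
    exact ⟨pos_of_one_div_eq_sub h0 ((mul_le_mul_of_nonneg_left hxR ha).trans_lt haR) hx,
      le_div_of_one_div_eq_sub ha h0 hxR haR hx⟩
  have hqq₀ : NekvindaComparable μ q fun _ => q₀ := h.of_one_div_sub_eq (hrq.mono fun x hx => by
    simp only [hx, hrq₀]
    ring)
  obtain ⟨I, hI_top, hI⟩ := h.symm.exists_lintegral_rpow_le hr (.of_forall fun _ => hr₀0)
    (.of_forall fun _ => le_rfl) hr0 hrR le_rfl one_ne_top one_ne_top
  have hJ_top : 2 ^ r₀ * ENNReal.ofReal (r₀ / (r₀ - 1)) * I * I ^ (a * q₀) ≠ ⊤ := by finiteness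
  have hT_one : 1 ≤ max 1 I ^ a := by simpa using ENNReal.rpow_le_rpow (le_max_left 1 I) ha
  obtain ⟨K, hK_top, hK⟩ := hqq₀.exists_lintegral_rpow_le measurable_const
    (hq.mono fun _ => And.left) (hq.mono fun _ => And.right) (.of_forall fun _ => hq₀)
    (.of_forall fun _ => le_rfl) hT_one (by finiteness) hJ_top
  refine ⟨K, hK_top, fun g hg hg_one hint => hK _ (measurable_fracMaximal (zero_lt_one.trans hb))
    (fun x => ?_) ?_⟩
  · refine (fracMaximal_le_lintegral_rpow hg.aemeasurable hg_one ha hr₀.le har₀.le x).trans ?_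
    gcongr
    exact (hI g hg hg_one hint).trans (le_max_right _ _)
  · refine (lintegral_fracMaximal_rpow_le hb hg ha hr₀ har₀ hrq₀).trans ?_
    have := hI g hg hg_one hint
    gcongr

end SmallValues

variable [PseudoMetricSpace X] [IsUltrametricDist X] [OpensMeasurableSpace X]

lemma lintegral_fracMaximal_add_rpow_le {h : X → ℝ≥0∞} {Q : ℝ} (hb : 0 < b)
    (hg : AEMeasurable g μ) (hq : AEMeasurable q μ) (hq_one : ∀ᵐ x ∂μ, 1 ≤ q x)
    (hqQ : ∀ᵐ x ∂μ, q x ≤ Q) :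
    ∫⁻ x, fracMaximal μ b a (g + h) x ^ q x ∂μ ≤
      2 ^ (Q - 1) * (∫⁻ x, fracMaximal μ b a g x ^ q x ∂μ +
        ∫⁻ x, fracMaximal μ b a h x ^ q x ∂μ) := by
  have hpt : ∀ᵐ x ∂μ, fracMaximal μ b a (g + h) x ^ q x ≤
      2 ^ (Q - 1) * (fracMaximal μ b a g x ^ q x + fracMaximal μ b a h x ^ q x) := by
    filter_upwards [hq_one, hqQ] with x hx_one hxQ
    refine (ENNReal.rpow_le_rpow (fracMaximal_add_le hg x) (by linarith)).trans
      ((ENNReal.rpow_add_le_mul_rpow_add_rpow _ _ hx_one).trans ?_)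
    gcongr
    exact one_le_two
  refine (lintegral_mono_ae hpt).trans_eq ?_
  rw [lintegral_const_mul' _ _ (rpow_ne_top_of_ne_zero two_ne_zero ofNat_ne_top),
    lintegral_add_left' ((measurable_fracMaximal hb).aemeasurable.pow hq)]

variable [TopologicalSpace.SeparableSpace X]

-- `g` is split at height `1`: the local regularity of `r` controls the large values, its decay
-- at infinity the small ones.
theorem exists_lintegral_fracMaximal_rpow_le (hr_loc : DieningCondition μ b r)
    (hr_inf : NekvindaComparable μ r fun _ => r₀) (hb : 1 < b) (hr : Measurable r) (ha : 0 ≤ a)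
    (hr₀ : 1 < r₀) (har₀ : a * r₀ < 1) (hs : 1 < s) (hsr : ∀ᵐ x ∂μ, s ≤ r x)
    (hrR : ∀ᵐ x ∂μ, r x ≤ R) (haR : a * R < 1) (hrq : ∀ᵐ x ∂μ, 1 / q x = 1 / r x - a) :
    ∃ K : ℝ≥0∞, K ≠ ⊤ ∧ ∀ g : X → ℝ≥0∞, Measurable g →
      ∫⁻ x, g x ^ r x ∂μ ≤ 1 → ∫⁻ x, fracMaximal μ b a g x ^ q x ∂μ ≤ K := by
  have hr0 : ∀ᵐ x ∂μ, 0 < r x := hsr.mono fun x hx => (zero_lt_one.trans hs).trans_le hx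
  obtain ⟨K₁, hK₁_top, hK₁⟩ :=
    hr_loc.exists_lintegral_fracMaximal_rpow_le hb hr ha hs hsr hrR haR hrq
  obtain ⟨K₂, hK₂_top, hK₂⟩ :=
    hr_inf.exists_lintegral_fracMaximal_rpow_le hb hr ha hr₀ har₀ hr0 hrR haR hrq
  have hq : AEMeasurable q μ := by
    refine AEMeasurable.congr (f := fun x => 1 / (1 / r x - a)) (by fun_prop) ?_
    filter_upwards [hrq] with x hx
    rw [← hx, one_div_one_div]
  have hq_one : ∀ᵐ x ∂μ, 1 ≤ q x := by
    filter_upwards [hsr, hr0, hrR, hrq] with x hsx h0 hxR hx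
    exact (hs.le.trans hsx).trans
      (le_of_one_div_eq_sub ha h0 ((mul_le_mul_of_nonneg_left hxR ha).trans_lt haR) hx)
  have hqQ : ∀ᵐ x ∂μ, q x ≤ R / (1 - a * R) := by
    filter_upwards [hr0, hrR, hrq] with x h0 hxR hx
    exact le_div_of_one_div_eq_sub ha h0 hxR haR hx
  refine ⟨2 ^ (R / (1 - a * R) - 1) * (K₁ + K₂), by finiteness, fun g hg hint => ?_⟩
  set A := {x | 1 ≤ g x}
  have hA : MeasurableSet A := measurableSet_le measurable_const hg
  have hpow (S : Set X) : ∫⁻ x, S.indicator g x ^ r x ∂μ ≤ 1 := by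
    refine (lintegral_mono_ae ?_).trans hint
    filter_upwards [hr0] with x hx
    gcongr
    exact Set.indicator_le_self S g x
  have hlarge (x : X) : A.indicator g x = 0 ∨ 1 ≤ A.indicator g x := by
    by_cases hx : x ∈ A
    · exact .inr ((Set.indicator_of_mem hx g).symm ▸ hx)
    · exact .inl (Set.indicator_of_notMem hx g)
  have hsmall (x : X) : Aᶜ.indicator g x ≤ 1 :=
    Set.indicator_apply_le' (fun hx => le_of_not_ge hx) fun _ => zero_le
  rw [← Set.indicator_self_add_compl A g]
  refine (lintegral_fracMaximal_add_rpow_le (zero_lt_one.trans hb) (hg.indicator hA).aemeasurable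
    hq hq_one hqQ).trans ?_
  gcongr
  · exact hK₁ _ (hg.indicator hA) hlarge (hpow A)
  · exact hK₂ _ (hg.indicator hA.compl) hsmall (hpow Aᶜ)

end VariableExponent

section Growth

open scoped Pointwise in
lemma exists_forall_measure_closedBall_zpow_eq {K V : Type*} [NormedField K]
    [NormedAddCommGroup V] [NormedSpace K V] [ProperSpace V] [MeasurableSpace V] [BorelSpace V]
    (μ : Measure V) [μ.IsAddHaarMeasure] {t : K} (ht : 1 < ‖t‖) :
    ∃ c : ℝ≥0∞, 1 ≤ c ∧ c ≠ ⊤ ∧ ∀ (x : V) (γ : ℤ),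
      μ (Metric.closedBall x (‖t‖ ^ γ)) = c ^ γ * μ (Metric.closedBall 0 1) := by
  have ht0 : t ≠ 0 := norm_pos_iff.1 (zero_lt_one.trans ht)
  have hball0 : μ (Metric.closedBall (0 : V) 1) ≠ 0 :=
    (Metric.measure_closedBall_pos μ 0 zero_lt_one).ne'
  set χ := distribHaarChar V (Units.mk0 t ht0)
  have hball (x : V) (γ : ℤ) :
      μ (Metric.closedBall x (‖t‖ ^ γ)) = (χ : ℝ≥0∞) ^ γ * μ (Metric.closedBall 0 1) := by
    have hsmul : Units.mk0 t ht0 ^ γ • Metric.closedBall (0 : V) 1 =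
        Metric.closedBall 0 (‖t‖ ^ γ) := by
      refine (smul_closedBall' (Units.ne_zero (Units.mk0 t ht0 ^ γ)) 0 1).trans ?_
      rw [smul_zero, Units.val_zpow_eq_zpow_val, Units.val_mk0, norm_zpow, mul_one]
    rw [← vadd_closedBall_zero, measure_vadd, ← hsmul, ← distribHaarChar_mul, map_zpow,
      ENNReal.coe_zpow (distribHaarChar_pos).ne']
  refine ⟨χ, ?_, coe_ne_top, hball⟩
  have hle : 1 * μ (Metric.closedBall (0 : V) 1) ≤ χ * μ (Metric.closedBall (0 : V) 1) := by
    rw [← zpow_one (χ : ℝ≥0∞), ← hball 0 1, zpow_one, one_mul]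
    exact measure_mono (Metric.closedBall_subset_closedBall ht.le)
  exact (ENNReal.mul_le_mul_iff_left hball0 measure_closedBall_lt_top.ne).1 hle

variable {X : Type*} [MeasurableSpace X] [PseudoMetricSpace X] {μ : Measure X} {x₀ : X}
  {r : X → ℝ} {b r₀ s R C : ℝ} {c A : ℝ≥0∞}

lemma DieningCondition.of_measure_closedBall_eq (hc : 1 ≤ c) (hc_top : c ≠ ⊤) (hA : A ≠ 0)
    (hA_top : A ≠ ⊤) (hμ : ∀ (x : X) (γ : ℤ), μ (Metric.closedBall x (b ^ γ)) = c ^ γ * A)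
    (hsr : ∀ᵐ x ∂μ, s ≤ r x) (hrR : ∀ᵐ x ∂μ, r x ≤ R)
    (hC : ∀ (x : X) (γ : ℤ), γ * (essInf r (μ.restrict (Metric.closedBall x (b ^ γ))) -
      essSup r (μ.restrict (Metric.closedBall x (b ^ γ)))) ≤ C) :
    DieningCondition μ b r := by
  have hc0 : c ≠ 0 := (zero_lt_one.trans_le hc).ne'
  refine ⟨c ^ C * max 1 A⁻¹ ^ (R - s), by finiteness, fun x γ => ?_⟩
  set B := Metric.closedBall x (b ^ γ)
  have hB : μ B ≠ 0 := by
    rw [hμ x γ]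
    exact mul_ne_zero (ENNReal.zpow_pos hc0 hc_top γ).ne' hA
  have : NeZero (μ.restrict B) := ⟨by simpa using hB⟩
  have hsr' := ae_restrict_of_ae (s := B) hsr
  have hrR' := ae_restrict_of_ae (s := B) hrR
  have hs := Filter.isBoundedUnder_of_eventually_ge hsr'
  have hR := Filter.isBoundedUnder_of_eventually_le hrR'
  have hinf : s ≤ essInf r (μ.restrict B) :=
    Filter.le_liminf_of_le hR.isCoboundedUnder_ge hsr'
  have hsup : essSup r (μ.restrict B) ≤ R :=
    Filter.limsup_le_of_le hs.isCoboundedUnder_le hrR'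
  have hle : essInf r (μ.restrict B) ≤ essSup r (μ.restrict B) := Filter.liminf_le_limsup hR hs
  have hCB := hC x γ
  set d := essInf r (μ.restrict B) - essSup r (μ.restrict B)
  calc μ B ^ d = c ^ (γ * d) * A⁻¹ ^ (-d) := by
        rw [hμ x γ, ENNReal.mul_rpow_of_ne_top (by finiteness) hA_top, ← ENNReal.rpow_intCast,
          ← ENNReal.rpow_mul, ENNReal.inv_rpow, ENNReal.rpow_neg, inv_inv]
    _ ≤ c ^ C * max 1 A⁻¹ ^ (-d) := by
        gcongr
        · linarith
        · exact le_max_right _ _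
    _ ≤ c ^ C * max 1 A⁻¹ ^ (R - s) := by
        gcongr
        · exact le_max_left _ _
        · linarith

lemma lintegral_rpow_neg_logb_le [OpensMeasurableSpace X] (hb : 1 < b) (hc : 1 ≤ c)
    (hc_top : c ≠ ⊤) (hμ : ∀ k : ℕ, μ (Metric.closedBall x₀ (b ^ k)) ≤ c ^ k * A) :
    ∫⁻ x, (2 * c) ^ (-Real.logb b (b + dist x x₀)) ∂μ ≤ 2 * (c * A) := by
  have hc0 : c ≠ 0 := (zero_lt_one.trans_le hc).ne'
  have hpt (x : X) : (2 * c) ^ (-Real.logb b (b + dist x x₀)) ≤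
      ∑' k : ℕ, (Metric.closedBall x₀ (b ^ (k + 1))).indicator (fun _ => (2 * c)⁻¹ ^ k) x := by
    set D := Real.logb b (b + dist x x₀)
    have hD : 0 ≤ D := Real.logb_nonneg hb (by linarith [dist_nonneg (x := x) (y := x₀)])
    have hx : x ∈ Metric.closedBall x₀ (b ^ (⌊D⌋₊ + 1)) := by
      have hlt := Nat.lt_floor_add_one D
      rw [Real.logb_lt_iff_lt_rpow hb (by positivity)] at hlt
      have : (b : ℝ) ^ ((⌊D⌋₊ : ℝ) + 1) = b ^ (⌊D⌋₊ + 1) := by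
        rw [← Nat.cast_add_one, Real.rpow_natCast]
      rw [Metric.mem_closedBall]
      linarith
    refine le_trans ?_ (ENNReal.le_tsum ⌊D⌋₊)
    rw [Set.indicator_of_mem hx, ENNReal.rpow_neg, ← ENNReal.inv_rpow, ← ENNReal.rpow_natCast]
    refine ENNReal.rpow_le_rpow_of_exponent_ge ?_ (Nat.floor_le hD)
    exact ENNReal.inv_le_one.2 (hc.trans (le_mul_of_one_le_left' one_le_two))
  calc ∫⁻ x, (2 * c) ^ (-Real.logb b (b + dist x x₀)) ∂μ
      ≤ ∑' k : ℕ, (2 * c)⁻¹ ^ k * μ (Metric.closedBall x₀ (b ^ (k + 1))) := by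
        refine (lintegral_mono hpt).trans_eq ?_
        rw [lintegral_tsum fun k =>
          (measurable_const.indicator Metric.isClosed_closedBall.measurableSet).aemeasurable]
        exact tsum_congr fun k =>
          lintegral_indicator_const Metric.isClosed_closedBall.measurableSet _
    _ ≤ ∑' k : ℕ, (2 * c)⁻¹ ^ k * (c ^ (k + 1) * A) := by
        gcongr
        exact hμ _
    _ = ∑' k : ℕ, 2⁻¹ ^ k * (c * A) := by
        refine tsum_congr fun k => ?_
        rw [ENNReal.mul_inv (.inl two_ne_zero) (.inl ofNat_ne_top), mul_pow, pow_succ, mul_assoc,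
          mul_assoc (c ^ k), ← mul_assoc (c⁻¹ ^ k), ← mul_pow, ENNReal.inv_mul_cancel hc0 hc_top,
          one_pow, one_mul]
    _ = 2 * (c * A) := by
        rw [ENNReal.tsum_mul_right, ENNReal.tsum_geometric, ENNReal.one_sub_inv_two, inv_inv]

lemma NekvindaComparable.of_abs_sub_le_div_logb [OpensMeasurableSpace X] (hb : 1 < b) (hc : 1 ≤ c)
    (hc_top : c ≠ ⊤) (hA_top : A ≠ ⊤)
    (hμ : ∀ k : ℕ, μ (Metric.closedBall x₀ (b ^ k)) ≤ c ^ k * A) (hr : ∀ᵐ x ∂μ, 1 ≤ r x)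
    (hr₀ : 1 ≤ r₀) (hC : 0 < C)
    (hrC : ∀ᵐ x ∂μ, |r x - r₀| ≤ C / Real.logb b (b + dist x x₀)) :
    NekvindaComparable μ r fun _ => r₀ := by
  have h2c : 1 ≤ 2 * c := hc.trans (le_mul_of_one_le_left' one_le_two)
  refine ⟨(2 * c) ^ C, fun x => Real.logb b (b + dist x x₀) / C, ENNReal.one_le_rpow h2c hC,
    by finiteness, ?_, ?_⟩
  · filter_upwards [hr, hrC] with x hx hxC
    have hD : 0 < Real.logb b (b + dist x x₀) :=
      Real.logb_pos hb (by linarith [dist_nonneg (x := x) (y := x₀)])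
    have hinv : |1 / r x - 1 / r₀| ≤ |r x - r₀| := by
      rw [div_sub_div _ _ (by linarith) (by linarith), one_mul, mul_one, abs_div, abs_sub_comm]
      refine div_le_self (abs_nonneg _) ?_
      rw [abs_of_nonneg (by nlinarith)]
      nlinarith
    rw [div_mul_eq_mul_div, div_le_one hC, mul_comm, ← le_div_iff₀ hD]
    exact hinv.trans hxC
  · simp only [← ENNReal.rpow_mul, mul_neg, mul_div_cancel₀ _ hC.ne']
    exact ((lintegral_rpow_neg_logb_le hb hc hc_top hμ).trans_lt (by finiteness)).ne

end Growth

section LimitAtInfinity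

lemma exists_tendsto_of_dist_le_div {X E : Type*} [PseudoMetricSpace E] [CompleteSpace E]
    {l : Filter X} [l.NeBot] {D : X → ℝ} {f : X → E} {C : ℝ} (hD0 : ∀ x, 0 < D x)
    (hD : Filter.Tendsto D l Filter.atTop)
    (hf : ∀ x y, D x ≤ D y → dist (f x) (f y) ≤ C / D x) :
    ∃ L, Filter.Tendsto f l (nhds L) ∧ ∀ x, dist (f x) L ≤ C / D x := by
  have hcauchy : Cauchy (l.map f) := by
    refine Metric.cauchy_iff.2 ⟨inferInstance, fun ε hε => ?_⟩
    have hlt {x y} (hx : C / ε < D x) (hxy : D x ≤ D y) : dist (f x) (f y) < ε :=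
      (hf x y hxy).trans_lt ((div_lt_comm₀ hε (hD0 x)).1 hx)
    refine ⟨f '' {x | C / ε < D x}, Filter.image_mem_map (hD.eventually_gt_atTop _), ?_⟩
    rintro _ ⟨x, hx, rfl⟩ _ ⟨y, hy, rfl⟩
    rcases le_total (D x) (D y) with hxy | hyx
    · exact hlt hx hxy
    · exact dist_comm (f x) (f y) ▸ hlt hy hyx
  obtain ⟨L, hL : Filter.Tendsto f l (nhds L)⟩ := cauchy_map_iff_exists_tendsto.1 hcauchy
  refine ⟨L, hL, fun x => le_of_tendsto (tendsto_const_nhds.dist hL) ?_⟩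
  filter_upwards [hD.eventually_ge_atTop (D x)] with y hy
  exact hf x y hy

lemma frequently_cocompact_of_ae {X : Type*} [TopologicalSpace X] [T2Space X] [NoncompactSpace X]
    [MeasurableSpace X] {μ : Measure X} [μ.IsOpenPosMeasure] {P : X → Prop}
    (h : ∀ᵐ x ∂μ, P x) : ∃ᶠ x in Filter.cocompact X, P x := by
  intro hnot
  obtain ⟨S, hS, hSP⟩ := Filter.mem_cocompact.1 hnot
  have hpos : 0 < μ Sᶜ :=
    hS.isClosed.isOpen_compl.measure_pos μ (Set.nonempty_compl.2 hS.ne_univ)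
  exact hpos.ne' (measure_mono_null (fun x hx => hSP hx) h)

end LimitAtInfinity

section PadicSpace

variable {μ : Measure (Fin n → ℚ_[p])} {r q : (Fin n → ℚ_[p]) → ℝ}

lemma luxNormE_le_mul_of_forall_lintegral_le {K : ℝ≥0∞} (hK : 1 ≤ K) (hK_top : K ≠ ⊤)
    (hq : ∀ᵐ x ∂μ, 1 ≤ q x) {u v : (Fin n → ℚ_[p]) → ℝ≥0∞}
    (h : ∀ η : ℝ≥0∞, η ≠ 0 → η ≠ ⊤ → ∫⁻ x, (u x / η) ^ r x ∂μ ≤ 1 →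
      ∫⁻ x, (v x / η) ^ q x ∂μ ≤ K) :
    luxNormE μ q v ≤ K * luxNormE μ r u := by
  have hK0 : K ≠ 0 := (zero_lt_one.trans_le hK).ne'
  rw [mul_comm, ← ENNReal.div_le_iff hK0 hK_top]
  refine le_sInf fun η ⟨hη0, hη_top, hη⟩ => (ENNReal.div_le_iff hK0 hK_top).2 (sInf_le ?_)
  refine ⟨ENNReal.mul_pos hη0.ne' hK0, by finiteness, ?_⟩
  calc ∫⁻ x, (v x / (η * K)) ^ q x ∂μ ≤ ∫⁻ x, K⁻¹ * (v x / η) ^ q x ∂μ := by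
        refine lintegral_mono_ae ?_
        filter_upwards [hq] with x hx
        have hdiv : v x / (η * K) = K⁻¹ * (v x / η) := by
          rw [div_eq_mul_inv, ENNReal.mul_inv (.inl hη0.ne') (.inl hη_top.ne), div_eq_mul_inv]
          ring
        rw [hdiv, mul_rpow_of_nonneg _ _ (zero_le_one.trans hx)]
        gcongr
        exact ENNReal.rpow_le_self_of_le_one (ENNReal.inv_le_one.2 hK) hx
    _ = K⁻¹ * ∫⁻ x, (v x / η) ^ q x ∂μ := lintegral_const_mul' _ _ (ENNReal.inv_ne_top.2 hK0)
    _ ≤ K⁻¹ * K := by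
        gcongr
        exact h η hη0.ne' hη_top.ne hη
    _ ≤ 1 := ENNReal.inv_mul_le_one K

lemma IsLogHolder.exists_forall_le (hr : IsLogHolder μ r) : ∃ R, ∀ x, r x ≤ R := by
  obtain ⟨-, -, C, -, -, hC⟩ := hr
  have hp : 1 < (p : ℝ) := mod_cast (Fact.out : p.Prime).one_lt
  refine ⟨r 0 + C, fun x => ?_⟩
  have hx := (le_abs_self _).trans (hC x 0)
  rw [norm_zero, min_eq_right (norm_nonneg x), add_zero, Real.logb_self_eq_one hp, div_one] at hx
  linarith

lemma IsLogHolder.ae_mem_Icc (hr : IsLogHolder μ r) :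
    ∀ᵐ x ∂μ, r x ∈ Set.Icc (essInf r μ) (essSup r μ) := by
  obtain ⟨R, hR⟩ := hr.exists_forall_le
  exact (ae_essInf_le (Filter.isBoundedUnder_of ⟨1, hr.2.1⟩)).and
    (ae_le_essSup (Filter.isBoundedUnder_of ⟨R, hR⟩))

lemma IsLogHolder.exists_tendsto_cocompact (hr : IsLogHolder μ r) (hn : 0 < n) :
    ∃ L C : ℝ, 0 < C ∧ Filter.Tendsto r (Filter.cocompact _) (nhds L) ∧
      ∀ x, |r x - L| ≤ C / Real.logb p (p + ‖x‖) := by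
  obtain ⟨-, -, C, hC0, -, hC⟩ := hr
  have hp : 1 < (p : ℝ) := mod_cast (Fact.out : p.Prime).one_lt
  have : Nonempty (Fin n) := Fin.pos_iff_nonempty.1 hn
  have : NoncompactSpace (Fin n → ℚ_[p]) := NormedSpace.noncompactSpace ℚ_[p] _
  set D : (Fin n → ℚ_[p]) → ℝ := fun x => Real.logb p (p + ‖x‖)
  have hD0 (x) : 0 < D x := Real.logb_pos hp (by linarith [norm_nonneg x])
  have hD : Filter.Tendsto D (Filter.cocompact _) Filter.atTop :=
    (Real.tendsto_logb_atTop hp).comp (Filter.tendsto_atTop_add_const_left _ _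
      (tendsto_norm_cocompact_atTop (E := Fin n → ℚ_[p])))
  have hf (x y) (hxy : D x ≤ D y) : dist (r x) (r y) ≤ (C + 1) / D x := by
    rw [Real.logb_le_logb hp (by positivity) (by positivity), add_le_add_iff_left] at hxy
    refine (hC x y).trans ?_
    rw [min_eq_left hxy]
    exact div_le_div_of_nonneg_right (by linarith) (hD0 x).le
  obtain ⟨L, hL, hLC⟩ := exists_tendsto_of_dist_le_div hD0 hD hf
  exact ⟨L, C + 1, by linarith, hL, hLC⟩

variable [μ.IsAddHaarMeasure]

variable (μ) in
lemma measure_pBall_ne_zero (x : Fin n → ℚ_[p]) (γ : ℤ) : μ (pBall x γ) ≠ 0 :=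
  (Metric.measure_closedBall_pos μ x (zpow_pos (mod_cast (Fact.out : p.Prime).pos) γ)).ne'

lemma measure_pBall_ne_top (x : Fin n → ℚ_[p]) (γ : ℤ) : μ (pBall x γ) ≠ ⊤ :=
  measure_closedBall_lt_top.ne

lemma fracMax_eq_fracMaximal (α : ℝ) (f : (Fin n → ℚ_[p]) → ℝ) :
    fracMax μ α f = fracMaximal μ p (α / n) fun x => (‖f x‖₊ : ℝ≥0∞) := by
  funext x
  refine iSup_congr fun γ => ?_
  rw [setLAverage_eq, ENNReal.rpow_sub _ _ (measure_pBall_ne_zero μ x γ)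
    (measure_pBall_ne_top x γ), ENNReal.rpow_one, ENNReal.mul_comm_div]
  rfl

variable [BorelSpace (Fin n → ℚ_[p])]

variable (μ) in
lemma exists_forall_measure_pBall_eq :
    ∃ c : ℝ≥0∞, 1 ≤ c ∧ c ≠ ⊤ ∧ ∀ (x : Fin n → ℚ_[p]) (γ : ℤ),
      μ (pBall x γ) = c ^ γ * μ (pBall 0 0) := by
  have hp : ‖(p : ℚ_[p])⁻¹‖ = p := by rw [norm_inv, Padic.norm_p, inv_inv]
  have hp_one : 1 < ‖(p : ℚ_[p])⁻¹‖ := hp ▸ mod_cast (Fact.out : p.Prime).one_lt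
  simpa only [pBall, hp, zpow_zero] using exists_forall_measure_closedBall_zpow_eq μ hp_one

lemma IsLogHolder.dieningCondition (hr : IsLogHolder μ r) : DieningCondition μ p r := by
  obtain ⟨c, hc, hc_top, hμ⟩ := exists_forall_measure_pBall_eq μ
  obtain ⟨R, hR⟩ := hr.exists_forall_le
  obtain ⟨-, hr_one, C, -, hC, -⟩ := hr
  exact .of_measure_closedBall_eq hc hc_top (measure_pBall_ne_zero μ 0 0)
    (measure_pBall_ne_top 0 0) hμ (.of_forall hr_one) (.of_forall hR) fun x γ => hC γ x

lemma IsLogHolder.exists_nekvindaComparable (hr : IsLogHolder μ r) (hn : 0 < n) :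
    ∃ L ∈ Set.Icc (essInf r μ) (essSup r μ), NekvindaComparable μ r fun _ => L := by
  have hp : 1 < (p : ℝ) := mod_cast (Fact.out : p.Prime).one_lt
  have : Nonempty (Fin n) := Fin.pos_iff_nonempty.1 hn
  have : NoncompactSpace (Fin n → ℚ_[p]) := NormedSpace.noncompactSpace ℚ_[p] _
  obtain ⟨c, hc, hc_top, hμ⟩ := exists_forall_measure_pBall_eq μ
  obtain ⟨L, C, hC, hL, hLC⟩ := hr.exists_tendsto_cocompact hn
  refine ⟨L, isClosed_Icc.mem_of_frequently_of_tendsto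
    (frequently_cocompact_of_ae hr.ae_mem_Icc) hL, ?_⟩
  refine .of_abs_sub_le_div_logb hp hc hc_top (measure_pBall_ne_top (μ := μ) 0 0) (x₀ := 0)
    (fun k => ?_) (.of_forall hr.2.1) (ge_of_tendsto' hL hr.2.1) hC (.of_forall fun x => ?_)
  · simpa only [pBall, zpow_natCast] using (hμ 0 k).le
  · simpa only [dist_zero_right] using hLC x

end PadicSpace

theorem fracMax_bounded_variable_general [BorelSpace (Fin n → ℚ_[p])]
    (μ : Measure (Fin n → ℚ_[p])) [μ.IsAddHaarMeasure] {α : ℝ} (hα : 0 ≤ α)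
    {r q : (Fin n → ℚ_[p]) → ℝ} (hr : IsLogHolder μ r) (hr_inf : 1 < essInf r μ)
    (hr_sup : α * essSup r μ < n) (hrq : ∀ᵐ x ∂μ, 1 / q x = 1 / r x - α / n) :
    ∃ C : ℝ, 0 < C ∧ ∀ f : (Fin n → ℚ_[p]) → ℝ, Measurable f →
      luxNormE μ q (fracMax μ α f) ≤ ENNReal.ofReal C * luxNorm μ r f := by
  have hr_bounds := hr.ae_mem_Icc
  have hn : 0 < n := by
    obtain ⟨x, hx⟩ := hr_bounds.exists
    have : 0 ≤ essSup r μ := (zero_le_one.trans (hr.2.1 x)).trans hx.2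
    exact_mod_cast (mul_nonneg hα this).trans_lt hr_sup
  have ha : 0 ≤ α / n := by positivity
  have haR : α / n * essSup r μ < 1 := by
    rwa [div_mul_eq_mul_div, div_lt_one (mod_cast hn)]
  have hq : ∀ᵐ x ∂μ, 1 ≤ q x := by
    filter_upwards [hr_bounds, hrq] with x hx hxq
    exact (hr.2.1 x).trans (le_of_one_div_eq_sub ha (zero_lt_one.trans_le (hr.2.1 x))
      ((mul_le_mul_of_nonneg_left hx.2 ha).trans_lt haR) hxq)
  obtain ⟨L, hL, hrL⟩ := hr.exists_nekvindaComparable hn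
  obtain ⟨K, hK_top, hK⟩ := exists_lintegral_fracMaximal_rpow_le hr.dieningCondition hrL
    (mod_cast (Fact.out : p.Prime).one_lt) hr.1 ha (hr_inf.trans_le hL.1)
    ((mul_le_mul_of_nonneg_left hL.2 ha).trans_lt haR) hr_inf (hr_bounds.mono fun _ => And.left)
    (hr_bounds.mono fun _ => And.right) haR hrq
  have hC_top : max 1 K ≠ ⊤ := max_ne_top one_ne_top hK_top
  refine ⟨(max 1 K).toReal, toReal_pos (by simp) hC_top, fun f hf => ?_⟩
  rw [ofReal_toReal hC_top, luxNorm, fracMax_eq_fracMaximal]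
  refine luxNormE_le_mul_of_forall_lintegral_le (le_max_left _ _) hC_top hq fun η hη0 _ hη => ?_
  simp only [← fracMaximal_div hη0]
  exact (hK _ (by fun_prop) hη).trans (le_max_right _ _)

theorem fracMax_bounded_variable
    (hn : 0 < n) [BorelSpace (Fin n → ℚ_[p])]
    (μ : Measure (Fin n → ℚ_[p])) [μ.IsAddHaarMeasure]
    (hμ : μ (Metric.closedBall 0 1) = 1)
    (α : ℝ) (hα0 : 0 < α) (hαn : α < n)
    (r q : (Fin n → ℚ_[p]) → ℝ) (hrlog : IsLogHolder μ r) (hqlog : IsLogHolder μ q)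
    (hrP : IsPExp μ r) (hrplus : essSup r μ < (n : ℝ) / α)
    (hrq : ∀ x, 1 / q x = 1 / r x - α / (n : ℝ)) :
    ∃ C : ℝ, 0 < C ∧ ∀ f : (Fin n → ℚ_[p]) → ℝ, Measurable f → luxNorm μ r f < ⊤ →
      luxNormE μ q (fracMax μ α f) ≤ ENNReal.ofReal C * luxNorm μ r f := by
  obtain ⟨C, hC, h⟩ := fracMax_bounded_variable_general μ hα0.le hrlog hrP.2.2.1
    ((lt_div_iff₀' hα0).1 hrplus) (.of_forall hrq)
  exact ⟨C, hC, fun f hf _ => h f hf⟩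

end
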